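/- Let ℛ be a Riemann-like 4-linear form on Minkowski space V, n a unit timelike vector, h the spatial metric, ε the spatial volume form, and define the spatial parts Y(ℛ)(x,y) := ℛ(x,n,y,n), Z(ℛ)(x,y) := (*ℛ)(x,n,y,n), X(ℛ)(x,y) := (*ℛ*)(x,n,y,n) (where *ℛ* denotes the left dual of the right dual). Then ℛ is reconstructed by the identity ℛ_{αβγδ} = 2 n_γ n_{[α} Y(ℛ)_{β]δ} + 2 h_{α[δ} X(ℛ)_{γ]β} + 2 n_δ n_{[β} Y(ℛ)_{α]γ} + 2 n_{[δ} Z(ℛ)^{ρ}_{ γ]} ε_{αβρ} + 2 n_{[β} Z(ℛ)^{ρ}_{ α]} ε_{γδρ} + h_{βδ}( h_{αγ} X(ℛ)^{ρ}_{ ρ} − X(ℛ)_{αγ} ) + h_{βγ}( X(ℛ)_{αδ} − h_{αδ} X(ℛ)^{ρ}_{ ρ} ), where square brackets denote antisymmetrization with weight ½ and indices are raised with η. -/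

import Mathlib

noncomputable section

/-- Minkowski space `V = ℝ⁴`. -/
abbrev V4 : Type := Fin 4 → ℝ

/-- The Minkowski bilinear form of signature `(-,+,+,+)`. -/
def η (x y : V4) : ℝ := -(x 0 * y 0) + x 1 * y 1 + x 2 * y 2 + x 3 * y 3

/-- The standard basis of `V4`. -/
def e4 (a : Fin 4) : V4 := Pi.single a 1

/-- Components of the Minkowski metric `diag(-1,1,1,1)` (its own inverse). -/
def ηm (a b : Fin 4) : ℝ := if a = b then (if a = (0 : Fin 4) then -1 else 1) else 0

/-- A 4-linear form on `V4`, given by its components in the standard basis. -/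
abbrev T4 : Type := Fin 4 → Fin 4 → Fin 4 → Fin 4 → ℝ

/-- A bilinear form on `V4`, given by its components in the standard basis. -/
abbrev T2 : Type := Fin 4 → Fin 4 → ℝ

/-- Evaluation of a 4-linear form (given by components) on vectors. -/
def eval4 (W : T4) (x y z w : V4) : ℝ :=
  ∑ a : Fin 4, ∑ b : Fin 4, ∑ c : Fin 4, ∑ d : Fin 4, W a b c d * x a * y b * z c * w d

/-- The alternating volume 4-form with `vol(e₀,e₁,e₂,e₃) = 1`. -/
def volv (x y z w : V4) : ℝ := Matrix.det (Matrix.of ![x, y, z, w])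

/-- Components `η_{αβγδ}` of the volume form. -/
def volc (a b c d : Fin 4) : ℝ := volv (e4 a) (e4 b) (e4 c) (e4 d)

/-- Left dual `(*W)_{μνλρ} = ½ η_{μν}{}^{αβ} W_{αβλρ}`. -/
def leftDual (W : T4) : T4 := fun μ ν lam ρ =>
  (1/2) * ∑ γ : Fin 4, ∑ δ : Fin 4, ∑ a : Fin 4, ∑ b : Fin 4,
    volc μ ν γ δ * ηm γ a * ηm δ b * W a b lam ρ

/-- Right dual `(W*)_{μνλρ} = ½ W_{μν}{}^{αβ} η_{αβλρ}`. -/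
def rightDual (W : T4) : T4 := fun μ ν lam ρ =>
  (1/2) * ∑ γ : Fin 4, ∑ δ : Fin 4, ∑ a : Fin 4, ∑ b : Fin 4,
    W μ ν a b * ηm a γ * ηm b δ * volc γ δ lam ρ

/-- A Weyl candidate: pair antisymmetries, pair exchange, first Bianchi, trace-free. -/
def IsWeyl (W : T4) : Prop :=
  (∀ x y z w : V4, eval4 W x y z w = - eval4 W y x z w) ∧
  (∀ x y z w : V4, eval4 W x y z w = - eval4 W x y w z) ∧
  (∀ x y z w : V4, eval4 W x y z w = eval4 W z w x y) ∧
  (∀ x y z w : V4, eval4 W x y z w + eval4 W x z w y + eval4 W x w y z = 0) ∧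
  (∀ x y : V4, ∑ a : Fin 4, ∑ b : Fin 4, ηm a b * eval4 W (e4 a) x (e4 b) y = 0)

/-- Electric part `E(W)_{ab} = W(e_a, n, e_b, n)`. -/
def Epart (W : T4) (n : V4) : T2 := fun a b => eval4 W (e4 a) n (e4 b) n

/-- Magnetic part `B(W)_{ab} = (W*)(e_a, n, e_b, n)`. -/
def Bpart (W : T4) (n : V4) : T2 := fun a b => eval4 (rightDual W) (e4 a) n (e4 b) n

/-- Raise both indices of a bilinear form's components. -/
def up2 (S : T2) : T2 := fun a b => ∑ c : Fin 4, ∑ d : Fin 4, ηm a c * ηm b d * S c d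

/-- Full contraction `S_{ab} T^{ab}`. -/
def contr2 (S T : T2) : ℝ := ∑ a : Fin 4, ∑ b : Fin 4, S a b * up2 T a b

/-- A Riemann-like 4-linear form: pair antisymmetries, pair-exchange symmetry and
the first Bianchi identity. -/
def IsRiemannLike (R : T4) : Prop :=
  (∀ x y z w : V4, eval4 R x y z w = - eval4 R y x z w) ∧
  (∀ x y z w : V4, eval4 R x y z w = - eval4 R x y w z) ∧
  (∀ x y z w : V4, eval4 R x y z w = eval4 R z w x y) ∧
  (∀ x y z w : V4, eval4 R x y z w + eval4 R x z w y + eval4 R x w y z = 0)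

/-!
A 2-form `ω` is recovered from its electric part `E = ω(·, n)` and the electric part `B` of its
Hodge dual: `ω_{ab} = n_a E_b - n_b E_a - B^c ε_{abc}`. Indeed the product `ε_{abc} ε_{def}` is the
Gram determinant of the spatial metric, whose contraction over one pair of indices shows that
`B^c ε_{abc}` is minus the projection of `ω` orthogonally to `n`.

A tensor `ℛ` antisymmetric in each pair is a 2-form in each of them. Decomposing both pairs
produces `Y`, `Z`, the electric part of the right dual, and the term `X^{rs} ε_{abr} ε_{cds}`, which
the Gram determinant expands in `h`. Pair-exchange symmetry makes `X` symmetric and turns the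
electric part of the right dual into the transpose of `Z`.
-/

open scoped Matrix

section Metric

/-- The covector `n_a` obtained from the vector `n` by lowering its index with the metric. -/
def lowerIndex (n : V4) : V4 := fun a => η n (e4 a)

/-- Components `h_{ab} = η_{ab} + n_a n_b` of the spatial metric of an observer `n`. -/
def spatialMetric (n : V4) : T2 := fun a b => ηm a b + lowerIndex n a * lowerIndex n b

theorem ηm_comm (a b : Fin 4) : ηm a b = ηm b a := by
  unfold ηm; grind

theorem ηm_mul_self (a : Fin 4) : ηm a a * ηm a a = 1 := by
  by_cases ha : a = 0 <;> simp [ηm, ha]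

theorem sum_ηm_mul (a : Fin 4) (f : Fin 4 → ℝ) : ∑ b, ηm a b * f b = ηm a a * f a :=
  Finset.sum_eq_single a (fun b _ hb => by simp [ηm, hb.symm]) (by simp)

theorem η_comm (x y : V4) : η x y = η y x := by
  simp only [η]; ring

theorem η_eq_sum (x y : V4) : η x y = ∑ a, ηm a a * (x a * y a) := by
  simp [η, ηm, Fin.sum_univ_four]

theorem dotProduct_e4 (f : V4) (a : Fin 4) : f ⬝ᵥ e4 a = f a :=
  dotProduct_single_one f a

theorem lowerIndex_apply (n : V4) (a : Fin 4) : lowerIndex n a = ηm a a * n a := by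
  simp [lowerIndex, η_eq_sum, e4, Pi.single_apply]

theorem η_e4_e4 (a b : Fin 4) : η (e4 a) (e4 b) = ηm a b := by
  rw [← lowerIndex, lowerIndex_apply, e4, Pi.single_apply, ηm_comm]
  grind [ηm]

theorem η_eq_dotProduct (f g : V4) : η f g = f ⬝ᵥ lowerIndex g := by
  simp only [η_eq_sum, dotProduct, lowerIndex_apply]
  exact Finset.sum_congr rfl fun a _ => by ring

-- Lowering is an involution on components, so `η` also evaluates the metric on covectors.
theorem η_lowerIndex (f n : V4) : η f (lowerIndex n) = f ⬝ᵥ n := by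
  rw [η_eq_dotProduct]
  congr 1
  ext a
  rw [lowerIndex_apply, lowerIndex_apply, ← mul_assoc, ηm_mul_self, one_mul]

theorem η_ηm (f : V4) (a : Fin 4) : η f (ηm a) = f a := by
  have hcol : ηm a = lowerIndex (e4 a) := funext fun b => (η_e4_e4 a b).symm
  rw [hcol, η_lowerIndex, dotProduct_e4]

theorem spatialMetric_comm (n : V4) (a b : Fin 4) : spatialMetric n a b = spatialMetric n b a := by
  simp only [spatialMetric, ηm_comm a b, mul_comm]

theorem η_spatialMetric (n f : V4) (a : Fin 4) :
    η f (spatialMetric n a) = f a + lowerIndex n a * (f ⬝ᵥ n) := by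
  rw [← η_ηm f a, ← η_lowerIndex f n]
  simp only [η, spatialMetric]
  ring

theorem spatialMetric_dotProduct {n : V4} (hn : η n n = -1) (a : Fin 4) :
    spatialMetric n a ⬝ᵥ n = 0 := by
  rw [← η_lowerIndex, η_comm, η_spatialMetric]
  rw [dotProduct_comm, ← η_eq_dotProduct, hn]
  ring

theorem trace_spatialMetric {n : V4} (hn : η n n = -1) :
    ∑ a, ηm a a * spatialMetric n a a = 3 := by
  have hterm : ∀ a, ηm a a * spatialMetric n a a = 1 + ηm a a * (n a * n a) := fun a => by
    rw [spatialMetric, lowerIndex_apply]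
    linear_combination (1 + ηm a a * n a * n a) * ηm_mul_self a
  simp only [hterm, Finset.sum_add_distrib, ← η_eq_sum, hn, Finset.sum_const, Finset.card_univ,
    Fintype.card_fin]
  norm_num

end Metric

section Contraction

theorem contr2_eq_sum_sum (S T : T2) :
    contr2 S T = ∑ a, ∑ b, ηm a a * ηm b b * (S a b * T a b) := by
  have hup : ∀ a b, up2 T a b = ηm a a * ηm b b * T a b := fun a b => by
    simp only [up2, mul_assoc, ← Finset.mul_sum, sum_ηm_mul b]
    rw [sum_ηm_mul a fun c => ηm b b * T c b]
  simp only [contr2, hup]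
  exact Finset.sum_congr rfl fun a _ => Finset.sum_congr rfl fun b _ => by ring

theorem contr2_eq_sum_η (S T : T2) : contr2 S T = ∑ a, ηm a a * η (S a) (T a) := by
  simp only [contr2_eq_sum_sum, η_eq_sum, Finset.mul_sum, mul_assoc]

theorem contr2_comm (S T : T2) : contr2 S T = contr2 T S := by
  simp only [contr2_eq_sum_η, η_comm]

theorem contr2_add (S T U : T2) : contr2 S (T + U) = contr2 S T + contr2 S U := by
  simp only [contr2, up2, Pi.add_apply, mul_add, Finset.sum_add_distrib]

theorem contr2_smul (S T : T2) (r : ℝ) : contr2 S (r • T) = r * contr2 S T := by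
  simp only [contr2_eq_sum_sum, Pi.smul_apply, smul_eq_mul, Finset.mul_sum]
  exact Finset.sum_congr rfl fun a _ => Finset.sum_congr rfl fun b _ => by ring

theorem contr2_transpose (S T : T2) :
    contr2 S (fun a b => T b a) = contr2 (fun a b => S b a) T := by
  simp only [contr2_eq_sum_sum]
  rw [Finset.sum_comm]
  exact Finset.sum_congr rfl fun a _ => Finset.sum_congr rfl fun b _ => by ring

theorem contr2_dotProduct (S : T2) (T : Fin 4 → T2) (n : V4) :
    contr2 S (fun a b => (fun i => T i a b) ⬝ᵥ n) = (fun i => contr2 S (T i)) ⬝ᵥ n := by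
  simp only [dotProduct, Fin.sum_univ_four, mul_comm _ (n _), ← contr2_smul, ← contr2_add]
  rfl

theorem contr2_contr2_comm (S T : T2) (W : T4) :
    contr2 S (fun a b => contr2 T (W a b))
      = contr2 T (fun c d => contr2 S fun a b => W a b c d) := by
  have hprod : ∀ S T, contr2 S T
      = ∑ p : Fin 4 × Fin 4, ηm p.1 p.1 * ηm p.2 p.2 * (S p.1 p.2 * T p.1 p.2) := fun S T => by
    rw [contr2_eq_sum_sum, Fintype.sum_prod_type]
  simp only [hprod, Finset.mul_sum]
  rw [Finset.sum_comm]
  exact Finset.sum_congr rfl fun p _ => Finset.sum_congr rfl fun q _ => by ring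

theorem contr2_mul (S : T2) (f g : V4) :
    contr2 S (fun a b => f a * g b) = η (fun a => η (S a) g) f := by
  rw [contr2_eq_sum_η, η_eq_sum]
  exact Finset.sum_congr rfl fun a _ => by simp only [η]; ring

theorem contr2_mul_swap (S : T2) (f g : V4) :
    contr2 S (fun a b => f a * g b) = η (fun b => η (fun a => S a b) f) g := by
  rw [← contr2_mul (fun b a => S a b), ← contr2_transpose]
  simp only [mul_comm]

theorem contr2_spatialMetric_mul (n : V4) (S : T2) (a b : Fin 4) :
    contr2 S (fun p q => spatialMetric n a p * spatialMetric n b q)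
      = S a b + lowerIndex n b * (S a ⬝ᵥ n) + lowerIndex n a * (fun p => S p b) ⬝ᵥ n
        + lowerIndex n a * lowerIndex n b * (fun p => S p ⬝ᵥ n) ⬝ᵥ n := by
  simp only [contr2_mul, η_spatialMetric]
  simp only [dotProduct, add_mul, Finset.sum_add_distrib, mul_assoc, ← Finset.mul_sum]
  ring

end Contraction

section Volume

/-- Components `ε_{abc} = vol(n, e_a, e_b, e_c)` of the spatial volume form of an observer `n`. -/
def spatialVol (n : V4) (a b c : Fin 4) : ℝ := volv n (e4 a) (e4 b) (e4 c)

theorem volv_comp_perm (v : Fin 4 → V4) (σ : Equiv.Perm (Fin 4)) :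
    volv (v (σ 0)) (v (σ 1)) (v (σ 2)) (v (σ 3))
      = (Equiv.Perm.sign σ : ℤ) * volv (v 0) (v 1) (v 2) (v 3) := by
  have hrows : ∀ u : Fin 4 → V4, ![u 0, u 1, u 2, u 3] = u := fun u => (FinVec.etaExpand_eq u)
  simp only [volv, hrows v, hrows fun i => v (σ i)]
  exact Matrix.det_permute σ (Matrix.of v)

theorem volv_swap (x y z w : V4) : volv y x z w = -volv x y z w := by
  simpa [Equiv.swap_apply_of_ne_of_ne] using volv_comp_perm ![x, y, z, w] (Equiv.swap 0 1)

theorem volv_rotate (x y z w : V4) : volv y z w x = -volv x y z w := by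
  simpa [sign_finRotate] using volv_comp_perm ![x, y, z, w] (finRotate 4)

theorem volv_self (x z w : V4) : volv x x z w = 0 := by
  linarith [volv_swap x x z w]

theorem volv_e4_dotProduct (n x y z : V4) : (fun a => volv (e4 a) x y z) ⬝ᵥ n = volv n x y z := by
  obtain ⟨c, hc⟩ : ∃ c : V4, ∀ w, volv w x y z = c ⬝ᵥ w :=
    ⟨fun i => (-1) ^ (i : ℕ) * ((Matrix.of ![0, x, y, z]).submatrix Fin.succ i.succAbove).det,
      fun w => by
        rw [volv, Matrix.det_succ_row_zero]
        exact Finset.sum_congr rfl fun i _ => mul_right_comm _ _ _⟩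
  simp only [hc, dotProduct_e4]

theorem spatialVol_dotProduct (n : V4) (a b : Fin 4) : spatialVol n a b ⬝ᵥ n = 0 := by
  have hrotate : spatialVol n a b = -fun c => volv (e4 c) n (e4 a) (e4 b) :=
    funext fun c => volv_rotate (e4 c) n (e4 a) (e4 b)
  rw [hrotate, neg_dotProduct, volv_e4_dotProduct, volv_self, neg_zero]

theorem det_mul_det_eq_neg_det_gram (v w : Fin 4 → V4) :
    (Matrix.of v).det * (Matrix.of w).det = -(Matrix.of fun i j => η (v i) (w j)).det := by
  have hgram : (Matrix.of fun i j => η (v i) (w j))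
      = Matrix.of v * Matrix.diagonal (fun a => ηm a a) * (Matrix.of w)ᵀ := by
    ext i j
    simp only [Matrix.of_apply, Matrix.mul_apply (N := _ᵀ), Matrix.mul_diagonal,
      Matrix.transpose_apply, η_eq_sum]
    exact Finset.sum_congr rfl fun a _ => by ring
  rw [hgram, Matrix.det_mul, Matrix.det_mul, Matrix.det_transpose, Matrix.det_diagonal]
  simp [ηm]

theorem det_gram_vecCons {n : V4} (hn : η n n = -1) {k : ℕ} (v w : Fin k → V4) :
    (Matrix.of fun i j => η (Matrix.vecCons n v i) (Matrix.vecCons n w j)).det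
      = -(Matrix.of fun i j => η (v i) (w j) + η n (v i) * η n (w j)).det := by
  -- Adding `η n (v i)` times the first row to row `i + 1` clears the first column below `-1`.
  rw [← Matrix.det_eq_of_forall_row_eq_smul_add_const (A := Matrix.of (Matrix.vecCons
    (fun j => η n (Matrix.vecCons n w j))
    fun i => Matrix.vecCons 0 fun j => η (v i) (w j) + η n (v i) * η n (w j)))
    (Matrix.vecCons 0 fun i => η n (v i)) 0 rfl]
  · rw [Matrix.det_succ_column_zero, Fin.sum_univ_succ]
    simp only [Nat.succ_eq_add_one, Fin.coe_ofNat_eq_mod, Nat.zero_mod, pow_zero,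
      Matrix.of_apply, Matrix.cons_val', Matrix.cons_val_zero, hn, mul_neg, mul_one,
      Fin.succAbove_zero, neg_mul, one_mul, Fin.val_succ, Matrix.cons_val_succ, mul_zero,
      zero_mul, Finset.sum_const_zero, add_zero, neg_inj]
    rfl
  · intro i j
    refine Fin.cases ?_ (fun i => ?_) i
    · simp
    · refine Fin.cases ?_ (fun j => ?_) j
      · simp [hn, η_comm n]
      · simp

theorem spatialVol_mul_spatialVol {n : V4} (hn : η n n = -1) (a b c d e f : Fin 4) :
    spatialVol n a b c * spatialVol n d e f
      = ((Matrix.of (spatialMetric n)).submatrix ![a, b, c] ![d, e, f]).det := by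
  have hcons : ∀ a b c, ![n, e4 a, e4 b, e4 c] = Matrix.vecCons n (e4 ∘ ![a, b, c]) :=
    fun a b c => congrArg (Matrix.vecCons n) (FinVec.map_eq e4 ![a, b, c])
  rw [spatialVol, spatialVol, volv, volv, det_mul_det_eq_neg_det_gram, hcons, hcons,
    det_gram_vecCons hn, neg_neg]
  simp only [Function.comp_apply, η_e4_e4]
  rfl

theorem contr2_spatialVol_mul {n : V4} (hn : η n n = -1) {S : T2}
    (hright : ∀ a, S a ⬝ᵥ n = 0) (hleft : ∀ b, (fun a => S a b) ⬝ᵥ n = 0) (a b c d : Fin 4) :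
    contr2 S (fun r s => spatialVol n a b r * spatialVol n c d s)
      = (spatialMetric n a c * spatialMetric n b d - spatialMetric n a d * spatialMetric n b c)
          * ∑ r, ηm r r * S r r
        - spatialMetric n a c * S d b + spatialMetric n a d * S c b
        + spatialMetric n b c * S d a - spatialMetric n b d * S c a := by
  have hproj : ∀ a b, contr2 S (fun r s => spatialMetric n a r * spatialMetric n b s) = S a b :=
    fun a b => by
      simp only [contr2_spatialMetric_mul, hright, hleft]
      simp [dotProduct]
  have htrace : contr2 S (spatialMetric n) = ∑ r, ηm r r * S r r := by
    simp only [contr2_eq_sum_η, η_spatialMetric, hright, mul_zero, add_zero]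
  have hdet : (fun r s => spatialVol n a b r * spatialVol n c d s)
      = (spatialMetric n a c * spatialMetric n b d - spatialMetric n a d * spatialMetric n b c)
          • spatialMetric n
        + (-spatialMetric n a c) • (fun r s => spatialMetric n d r * spatialMetric n b s)
        + spatialMetric n a d • (fun r s => spatialMetric n c r * spatialMetric n b s)
        + spatialMetric n b c • (fun r s => spatialMetric n d r * spatialMetric n a s)
        + (-spatialMetric n b d) • (fun r s => spatialMetric n c r * spatialMetric n a s) := by
    ext r s
    rw [spatialVol_mul_spatialVol hn, Matrix.det_fin_three]
    simp only [Matrix.submatrix_apply, Matrix.cons_val_zero, Matrix.of_apply,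
      Matrix.cons_val_one, Matrix.cons_val, spatialMetric_comm n r, neg_smul, Pi.add_apply,
      Pi.smul_apply, Pi.neg_apply, smul_eq_mul]
    ring
  rw [hdet]
  simp only [contr2_add, contr2_smul, hproj, htrace]
  ring

theorem η_spatialVol_spatialVol {n : V4} (hn : η n n = -1) (a b c d : Fin 4) :
    η (spatialVol n a b) (spatialVol n c d)
      = spatialMetric n a c * spatialMetric n b d - spatialMetric n a d * spatialMetric n b c := by
  have hleft : ∀ b, (fun a => spatialMetric n a b) ⬝ᵥ n = 0 := fun b => by
    simpa only [spatialMetric_comm n _ b] using spatialMetric_dotProduct hn b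
  calc
    η (spatialVol n a b) (spatialVol n c d)
      = contr2 (spatialMetric n) (fun r s => spatialVol n a b r * spatialVol n c d s) := by
        simp only [contr2_mul, η_comm (spatialMetric n _), η_spatialMetric, spatialVol_dotProduct,
          mul_zero, add_zero]
        exact η_comm _ _
    _ = _ := by
      rw [contr2_spatialVol_mul hn (spatialMetric_dotProduct hn) hleft, trace_spatialMetric hn,
        spatialMetric_comm n d b, spatialMetric_comm n c b, spatialMetric_comm n d a,
        spatialMetric_comm n c a]
      ring

end Volume

section TwoForm

/-- The Hodge dual `½ η_{ab}{}^{cd} ω_{cd}` of a 2-form. -/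
def hodge (ω : T2) : T2 := fun a b => (1 / 2) * contr2 (volc a b) ω

/-- The electric part `ω_{ab} n^b` of a 2-form relative to an observer `n`. The magnetic part of
`ω` is the electric part of `hodge ω`. -/
def electric (n : V4) (ω : T2) : V4 := fun a => ω a ⬝ᵥ n

theorem hodge_swap (ω : T2) (a b : Fin 4) : hodge ω a b = -hodge ω b a := by
  have hvol : volc a b = (-1 : ℝ) • volc b a := by
    ext c d
    simp [volc, volv_swap (e4 a)]
  rw [hodge, hvol, contr2_comm, contr2_smul, contr2_comm, hodge]
  ring

theorem electric_dotProduct (n : V4) {ω : T2} (hω : ∀ a b, ω a b = -ω b a) :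
    electric n ω ⬝ᵥ n = 0 := by
  have hneg : electric n ω ⬝ᵥ n = -(electric n ω ⬝ᵥ n) := by
    simp only [electric, dotProduct, Finset.sum_mul, ← Finset.sum_neg_distrib]
    rw [Finset.sum_comm]
    exact Finset.sum_congr rfl fun a _ => Finset.sum_congr rfl fun b _ => by rw [hω b a]; ring
  linarith

theorem hodge_neg (ω : T2) : hodge (-ω) = -hodge ω := by
  ext a b
  rw [Pi.neg_apply, Pi.neg_apply, hodge, hodge, ← neg_one_smul ℝ ω, contr2_smul]
  ring

theorem electric_hodge (n : V4) (ω : T2) (c : Fin 4) :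
    electric n (hodge ω) c = -(1 / 2) * contr2 ω (fun p q => spatialVol n p q c) := by
  have hvol : ∀ p q, (fun i => volc c i p q) ⬝ᵥ n = -spatialVol n p q c := fun p q => by
    have hrotate : (fun i => volc c i p q) = -fun i => volv (e4 i) (e4 p) (e4 q) (e4 c) :=
      funext fun i => by rw [Pi.neg_apply, volv_rotate, neg_neg, volc]
    rw [hrotate, neg_dotProduct, volv_e4_dotProduct, spatialVol]
  calc
    electric n (hodge ω) c = (1 / 2) * (fun i => contr2 ω (volc c i)) ⬝ᵥ n := by
      simp only [electric, hodge, contr2_comm _ ω, dotProduct, Finset.mul_sum, mul_assoc]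
    _ = (1 / 2) * contr2 ω ((-1 : ℝ) • fun p q => spatialVol n p q c) := by
      rw [← contr2_dotProduct]
      simp only [hvol]
      congr 2
      ext p q
      simp
    _ = _ := by rw [contr2_smul]; ring

theorem η_electric_hodge {n : V4} (hn : η n n = -1) {ω : T2} (hω : ∀ a b, ω a b = -ω b a)
    (a b : Fin 4) :
    η (electric n (hodge ω)) (spatialVol n a b)
      = -contr2 ω (fun p q => spatialMetric n a p * spatialMetric n b q) := by
  set P : T2 := fun p q => spatialMetric n a p * spatialMetric n b q with hP
  have hflip : contr2 ω (fun p q => P q p) = -contr2 ω P := by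
    have hω' : (fun p q => ω q p) = (-1 : ℝ) • ω := by
      ext p q
      simp [hω q p]
    rw [contr2_transpose, hω', contr2_comm, contr2_smul, contr2_comm, neg_one_mul]
  have hvol : (fun p q => η (spatialVol n p q) (spatialVol n a b))
      = P + (-1 : ℝ) • fun p q => P q p := by
    ext p q
    simp only [η_spatialVol_spatialVol hn, spatialMetric_comm n p, spatialMetric_comm n q,
      Pi.add_apply, Pi.smul_apply, smul_eq_mul, hP]
    ring
  calc
    η (electric n (hodge ω)) (spatialVol n a b)
      = -(1 / 2) * contr2 ω (fun p q => η (spatialVol n p q) (spatialVol n a b)) := by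
        simp only [η_eq_dotProduct]
        rw [contr2_dotProduct ω fun c p q => spatialVol n p q c]
        simp only [dotProduct, electric_hodge, Finset.mul_sum, mul_assoc]
    _ = -contr2 ω P := by
      rw [hvol, contr2_add, contr2_smul, hflip]
      ring

theorem two_form_eq_electric_magnetic {n : V4} (hn : η n n = -1) {ω : T2}
    (hω : ∀ a b, ω a b = -ω b a) (a b : Fin 4) :
    ω a b = lowerIndex n a * electric n ω b - lowerIndex n b * electric n ω a
      - η (electric n (hodge ω)) (spatialVol n a b) := by
  have hcol : (fun p => ω p b) ⬝ᵥ n = -electric n ω b := by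
    rw [electric, ← neg_dotProduct]
    exact congrArg (· ⬝ᵥ n) (funext fun p => hω p b)
  have hnn : (fun p => ω p ⬝ᵥ n) ⬝ᵥ n = 0 := electric_dotProduct n hω
  rw [η_electric_hodge hn hω, contr2_spatialMetric_mul, hcol, hnn, electric, electric]
  ring

end TwoForm

section DoubleTwoForm

variable {n : V4} {R : T4}

theorem eval4_e4 (W : T4) (a b c d : Fin 4) :
    eval4 W (e4 a) (e4 b) (e4 c) (e4 d) = W a b c d := by
  simp [eval4, e4, Pi.single_apply]

theorem Epart_eq_electric (W : T4) (n : V4) (a b : Fin 4) :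
    Epart W n a b = electric n (fun i j => electric n (W i j) b) a := by
  simp [Epart, eval4, e4, Pi.single_apply, electric, dotProduct, Finset.sum_mul, mul_right_comm]

theorem leftDual_apply (W : T4) (a b c d : Fin 4) :
    leftDual W a b c d = hodge (fun i j => W i j c d) a b := by
  simp only [leftDual, hodge, contr2, up2, Finset.mul_sum, mul_assoc]

theorem rightDual_apply (W : T4) (a b : Fin 4) : rightDual W a b = hodge (W a b) := by
  ext c d
  have hvol : ∀ i j, volc i j c d = volc c d i j := fun i j => by
    simp only [volc]
    rw [volv_rotate (e4 d), volv_rotate (e4 c), neg_neg]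
  simp only [rightDual, hodge, contr2, up2, Finset.mul_sum, hvol]
  refine Finset.sum_congr rfl fun i _ => Finset.sum_congr rfl fun j _ =>
    Finset.sum_congr rfl fun k _ => Finset.sum_congr rfl fun l _ => ?_
  rw [ηm_comm k i, ηm_comm l j]
  ring

theorem hodge_electric (W : T4) (n : V4) (a b c : Fin 4) :
    hodge (fun i j => electric n (W i j) c) a b = electric n (leftDual W a b) c := by
  simp only [electric, hodge]
  rw [contr2_dotProduct (volc a b) fun k i j => W i j c k]
  simp only [dotProduct, leftDual_apply, hodge, Finset.mul_sum, mul_assoc]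

theorem Epart_leftDual (W : T4) (n : V4) (a b : Fin 4) :
    Epart (leftDual W) n a b = electric n (hodge fun i j => electric n (W i j) b) a := by
  rw [Epart_eq_electric]
  congr 1
  ext i j
  rw [hodge_electric]

theorem electric_swap (hR : ∀ a b c d, R a b c d = -R b a c d) (i j c : Fin 4) :
    electric n (R i j) c = -electric n (R j i) c := by
  rw [electric, electric, ← neg_dotProduct]
  exact congrArg (· ⬝ᵥ n) (funext fun d => hR i j c d)

theorem electric_eq_Epart (hn : η n n = -1) (hR : ∀ a b c d, R a b c d = -R b a c d)
    (a b c : Fin 4) :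
    electric n (R a b) c = lowerIndex n a * Epart R n b c - lowerIndex n b * Epart R n a c
      - η (fun r => Epart (leftDual R) n r c) (spatialVol n a b) := by
  simp only [Epart_leftDual]
  simp only [Epart_eq_electric]
  exact two_form_eq_electric_magnetic hn (fun i j => electric_swap hR i j c) a b

theorem Epart_dotProduct_left (hR : ∀ a b c d, R a b c d = -R b a c d) (b : Fin 4) :
    (fun a => Epart R n a b) ⬝ᵥ n = 0 := by
  simp only [Epart_eq_electric]
  exact electric_dotProduct n fun i j => electric_swap hR i j b

theorem Epart_dotProduct_right (hR : ∀ a b c d, R a b c d = -R a b d c) (a : Fin 4) :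
    Epart R n a ⬝ᵥ n = 0 := by
  calc
    Epart R n a ⬝ᵥ n = ∑ j, electric n (R a j) ⬝ᵥ n * n j := by
      simp only [dotProduct, Epart_eq_electric, electric, Finset.sum_mul]
      rw [Finset.sum_comm]
      simp only [mul_right_comm]
    _ = 0 := by simp only [electric_dotProduct n (hR a _), zero_mul, Finset.sum_const_zero]

theorem leftDual_swap_left (W : T4) (a b c d : Fin 4) :
    leftDual W a b c d = -leftDual W b a c d := by
  rw [leftDual_apply, leftDual_apply, hodge_swap]

theorem leftDual_swap_right (hR : ∀ a b c d, R a b c d = -R a b d c) (a b c d : Fin 4) :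
    leftDual R a b c d = -leftDual R a b d c := by
  have hneg : (fun i j => R i j c d) = -fun i j => R i j d c := by
    ext i j
    exact hR i j c d
  rw [leftDual_apply, leftDual_apply, hneg, hodge_neg]
  rfl

theorem rightDual_swap_left (hR : ∀ a b c d, R a b c d = -R b a c d) (a b c d : Fin 4) :
    rightDual R a b c d = -rightDual R b a c d := by
  have hneg : R a b = -R b a := by
    ext i j
    exact hR a b i j
  rw [rightDual_apply, rightDual_apply, hneg, hodge_neg]
  rfl

theorem rightDual_swap_right (W : T4) (a b c d : Fin 4) :
    rightDual W a b c d = -rightDual W a b d c := by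
  rw [rightDual_apply, hodge_swap]

theorem leftDual_rightDual_comm (W : T4) : leftDual (rightDual W) = rightDual (leftDual W) := by
  ext a b c d
  have hsmul : ∀ (S T : T2) (r : ℝ), contr2 S (fun i j => r * T i j) = r * contr2 S T :=
    contr2_smul
  have hinner : (fun i j => leftDual W a b i j)
      = fun i j => (1 / 2) * contr2 (volc a b) fun k l => W k l i j := by
    ext i j
    rw [leftDual_apply, hodge]
  calc
    leftDual (rightDual W) a b c d
      = (1 / 2) * ((1 / 2) * contr2 (volc a b) fun i j => contr2 (volc c d) (W i j)) := by
        simp only [leftDual_apply, rightDual_apply, hodge, hsmul]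
    _ = rightDual (leftDual W) a b c d := by
        rw [contr2_contr2_comm, ← hsmul, ← hinner, rightDual_apply, hodge]

theorem double_two_form_eq (hn : η n n = -1) (hleft : ∀ a b c d, R a b c d = -R b a c d)
    (hright : ∀ a b c d, R a b c d = -R a b d c) {X Z : T2}
    (hX : X = Epart (leftDual (rightDual R)) n) (hZ : Z = Epart (leftDual R) n) (a b c d : Fin 4) :
    R a b c d =
      lowerIndex n c * (lowerIndex n a * Epart R n b d - lowerIndex n b * Epart R n a d
          - η (fun r => Z r d) (spatialVol n a b))
      - lowerIndex n d * (lowerIndex n a * Epart R n b c - lowerIndex n b * Epart R n a c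
          - η (fun r => Z r c) (spatialVol n a b))
      - lowerIndex n a * η (Bpart R n b) (spatialVol n c d)
      + lowerIndex n b * η (Bpart R n a) (spatialVol n c d)
      + (spatialMetric n a c * spatialMetric n b d - spatialMetric n a d * spatialMetric n b c)
          * ∑ r, ηm r r * X r r
      - spatialMetric n a c * X d b + spatialMetric n a d * X c b
      + spatialMetric n b c * X d a - spatialMetric n b d * X c a := by
  have hmagnetic : ∀ e, electric n (hodge (R a b)) e
      = lowerIndex n a * Bpart R n b e - lowerIndex n b * Bpart R n a e
        - η (fun r => X r e) (spatialVol n a b) := fun e => by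
    rw [← rightDual_apply, hX]
    exact electric_eq_Epart hn (rightDual_swap_left hleft) a b e
  have hXX : contr2 X (fun r s => spatialVol n a b r * spatialVol n c d s) = _ :=
    contr2_spatialVol_mul hn
      (hX ▸ Epart_dotProduct_right (leftDual_swap_right (rightDual_swap_right R)))
      (hX ▸ Epart_dotProduct_left (leftDual_swap_left (rightDual R))) a b c d
  rw [contr2_mul_swap] at hXX
  rw [two_form_eq_electric_magnetic hn (hright a b) c d, electric_eq_Epart hn hleft,
    electric_eq_Epart hn hleft, funext hmagnetic, ← hZ]
  simp only [η] at hXX ⊢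
  linear_combination hXX

end DoubleTwoForm

section PairSymmetry

variable {R : T4}

theorem rightDual_eq_leftDual_of_pair_comm (hR : ∀ a b c d, R a b c d = R c d a b)
    (a b c d : Fin 4) : rightDual R a b c d = leftDual R c d a b := by
  rw [rightDual_apply, leftDual_apply]
  congr 1
  ext i j
  exact hR a b i j

theorem leftDual_rightDual_pair_comm (hR : ∀ a b c d, R a b c d = R c d a b) (a b c d : Fin 4) :
    leftDual (rightDual R) a b c d = leftDual (rightDual R) c d a b := by
  rw [leftDual_rightDual_comm, rightDual_apply, ← leftDual_rightDual_comm, leftDual_apply]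
  congr 1
  ext i j
  rw [rightDual_eq_leftDual_of_pair_comm hR]

theorem Epart_transpose {W W' : T4} (hW : ∀ a b c d, W a b c d = W' c d a b) (n : V4)
    (a b : Fin 4) : Epart W n a b = Epart W' n b a := by
  simp only [Epart_eq_electric, electric, dotProduct, Finset.sum_mul, hW]
  rw [Finset.sum_comm]
  simp only [mul_right_comm]

end PairSymmetry

theorem sum_sum_ηm_sub_mul (f g e : V4) (s t : ℝ) :
    ∑ r, ∑ r', (s * ηm r r' * f r' - t * ηm r r' * g r') * e r = s * η f e - t * η g e := by
  simp only [sub_mul, Finset.sum_sub_distrib, mul_assoc, mul_left_comm s, mul_left_comm t,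
    sum_ηm_mul, η_eq_sum, Finset.mul_sum]

theorem stmt_12_general (R : T4) (hfst : ∀ x y z w : V4, eval4 R x y z w = -eval4 R y x z w)
    (hpair : ∀ x y z w : V4, eval4 R x y z w = eval4 R z w x y) (n : V4) (hn : η n n = -1)
    (nl : Fin 4 → ℝ) (hnl : ∀ μ, nl μ = η n (e4 μ))
    (h : T2) (hh : h = fun a b => ηm a b + nl a * nl b)
    (εc : Fin 4 → Fin 4 → Fin 4 → ℝ)
    (hεc : ∀ a b c, εc a b c = volv n (e4 a) (e4 b) (e4 c))
    (X Y Z : T2)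
    (hX : X = fun a b => eval4 (leftDual (rightDual R)) (e4 a) n (e4 b) n)
    (hY : Y = fun a b => eval4 R (e4 a) n (e4 b) n)
    (hZ : Z = fun a b => eval4 (leftDual R) (e4 a) n (e4 b) n)
    (trX : ℝ) (htrX : trX = ∑ ρ : Fin 4, ∑ ρ' : Fin 4, ηm ρ ρ' * X ρ ρ') :
    ∀ α β γ δ, R α β γ δ =
      2 * nl γ * ((1/2) * (nl α * Y β δ - nl β * Y α δ))
      + 2 * ((1/2) * (h α δ * X γ β - h α γ * X δ β))
      + 2 * nl δ * ((1/2) * (nl β * Y α γ - nl α * Y β γ))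
      + 2 * ((1/2) * (∑ ρ : Fin 4, ∑ ρ' : Fin 4,
          (nl δ * ηm ρ ρ' * Z ρ' γ - nl γ * ηm ρ ρ' * Z ρ' δ) * εc α β ρ))
      + 2 * ((1/2) * (∑ ρ : Fin 4, ∑ ρ' : Fin 4,
          (nl β * ηm ρ ρ' * Z ρ' α - nl α * ηm ρ ρ' * Z ρ' β) * εc γ δ ρ))
      + h β δ * (h α γ * trX - X α γ)
      + h β γ * (X α δ - h α δ * trX) := by
  replace hfst : ∀ a b c d, R a b c d = -R b a c d := fun a b c d => by
    simpa only [eval4_e4] using hfst (e4 a) (e4 b) (e4 c) (e4 d)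
  replace hpair : ∀ a b c d, R a b c d = R c d a b := fun a b c d => by
    simpa only [eval4_e4] using hpair (e4 a) (e4 b) (e4 c) (e4 d)
  have hsnd : ∀ a b c d, R a b c d = -R a b d c := fun a b c d => by
    rw [hpair, hfst, hpair d c a b]
  have hB : ∀ a, Bpart R n a = fun r => Z r a := fun a => funext fun r => by
    rw [hZ]
    exact Epart_transpose (rightDual_eq_leftDual_of_pair_comm hpair) n a r
  have hXsymm : ∀ a b, X a b = X b a := fun a b => by
    rw [hX]
    exact Epart_transpose (leftDual_rightDual_pair_comm hpair) n a b
  have htr : trX = ∑ r, ηm r r * X r r := by simp only [htrX, sum_ηm_mul]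
  obtain rfl : nl = lowerIndex n := funext hnl
  obtain rfl : h = spatialMetric n := hh
  obtain rfl : Y = Epart R n := hY
  obtain rfl : εc = spatialVol n := funext fun a => funext fun b => funext (hεc a b)
  intro α β γ δ
  rw [double_two_form_eq hn hfst hsnd hX hZ, hB, hB, sum_sum_ηm_sub_mul, sum_sum_ηm_sub_mul, htr,
    hXsymm δ α, hXsymm γ α]
  ring

/-- a Riemann-like tensor is reconstructed from its spatial parts
`X(ℛ)`, `Y(ℛ)`, `Z(ℛ)`. -/
theorem stmt_12 (R : T4) (hR : IsRiemannLike R) (n : V4) (hn : η n n = -1)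
    (nl : Fin 4 → ℝ) (hnl : ∀ μ, nl μ = η n (e4 μ))
    (h : T2) (hh : h = fun a b => ηm a b + nl a * nl b)
    (εc : Fin 4 → Fin 4 → Fin 4 → ℝ)
    (hεc : ∀ a b c, εc a b c = volv n (e4 a) (e4 b) (e4 c))
    (X Y Z : T2)
    (hX : X = fun a b => eval4 (leftDual (rightDual R)) (e4 a) n (e4 b) n)
    (hY : Y = fun a b => eval4 R (e4 a) n (e4 b) n)
    (hZ : Z = fun a b => eval4 (leftDual R) (e4 a) n (e4 b) n)
    (trX : ℝ) (htrX : trX = ∑ ρ : Fin 4, ∑ ρ' : Fin 4, ηm ρ ρ' * X ρ ρ') :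
    ∀ α β γ δ, R α β γ δ =
      2 * nl γ * ((1/2) * (nl α * Y β δ - nl β * Y α δ))
      + 2 * ((1/2) * (h α δ * X γ β - h α γ * X δ β))
      + 2 * nl δ * ((1/2) * (nl β * Y α γ - nl α * Y β γ))
      + 2 * ((1/2) * (∑ ρ : Fin 4, ∑ ρ' : Fin 4,
          (nl δ * ηm ρ ρ' * Z ρ' γ - nl γ * ηm ρ ρ' * Z ρ' δ) * εc α β ρ))
      + 2 * ((1/2) * (∑ ρ : Fin 4, ∑ ρ' : Fin 4,
          (nl β * ηm ρ ρ' * Z ρ' α - nl α * ηm ρ ρ' * Z ρ' β) * εc γ δ ρ))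
      + h β δ * (h α γ * trX - X α γ)
      + h β γ * (X α δ - h α δ * trX) :=
  stmt_12_general R hR.1 hR.2.2.1 n hn nl hnl h hh εc hεc X Y Z hX hY hZ trX htrX
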